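/- Let N ≥ 2 be an integer, let C₀, a, b > 0 with a·e^{C₀/2} > b, and let ψ be a model function such that ψ(r) = a·e^{C₀ r²/2} - b for all r ≥ 1. Let H be the associated function. Then there exist constants 0 < c₁ < c₂ and R ≥ 2 such that c₁ log r ≤ H(r) ≤ c₂ log r and c₁/r ≤ H'(r) ≤ c₂/r for all r ≥ R. -/

import Mathlib

open Real MeasureTheory Set Filter

/-- The function `H` associated with a model function `ψ` on an `N`-dimensional model
manifold: `H r = ∫₀^r (∫₀^s ψ(t)^{N-1} dt) / ψ(s)^{N-1} ds`. -/
noncomputable def Hfun (N : ℕ) (ψ : ℝ → ℝ) (r : ℝ) : ℝ :=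
  ∫ s in (0:ℝ)..r, (∫ t in (0:ℝ)..s, ψ t ^ (N - 1)) / ψ s ^ (N - 1)

/-! Put `φ = ψ ^ (N - 1)` and `F r = ∫₀^r φ`, so that `H' = F / φ`. Since `ψ' ≍ r ψ`, also
`φ' ≍ r φ`, and then `(φ / r)' ≍ φ = F'`. Bounds between derivatives integrate, so `F ≍ φ / r`:
this is `H' ≍ 1 / r`, and integrating once more gives `H ≍ log r`. Near the pole `φ` is comparable
to a monotone function, whence `F / φ = O(s)` there and `H` is a genuine integral. -/

open Asymptotics
open scoped Topology

section Comparison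

theorem eventually_inv_mul_le_and_le_mul_of_isTheta {α : Type*} {l : Filter α} {u v : α → ℝ}
    (huv : u =Θ[l] v) (hu : ∀ᶠ x in l, 0 ≤ u x) (hv : ∀ᶠ x in l, 0 ≤ v x) :
    ∀ᶠ K : ℝ in atTop, ∀ᶠ x in l, K⁻¹ * v x ≤ u x ∧ u x ≤ K * v x := by
  filter_upwards [isBigO_iff_eventually_isBigOWith.1 huv.1,
    isBigO_iff_eventually_isBigOWith.1 huv.2, eventually_gt_atTop 0] with K huK hvK hK
  filter_upwards [huK.bound, hvK.bound, hu, hv] with x hux hvx hu0 hv0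
  rw [norm_of_nonneg hu0, norm_of_nonneg hv0] at hux hvx
  exact ⟨(inv_mul_le_iff₀ hK).2 hvx, hux⟩

theorem isBigO_atTop_of_hasDerivAt {E : Type*} [NormedAddCommGroup E] [NormedSpace ℝ E]
    {f f' : ℝ → E} {g g' : ℝ → ℝ} (hf : ∀ᶠ x in atTop, HasDerivAt f (f' x) x)
    (hg : ∀ᶠ x in atTop, HasDerivAt g (g' x) x) (hg_pos : ∀ᶠ x in atTop, 0 < g x)
    (hg'_nonneg : ∀ᶠ x in atTop, 0 ≤ g' x) (hfg : f' =O[atTop] g') : f =O[atTop] g := by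
  obtain ⟨C, hC⟩ := hfg.bound
  obtain ⟨R, hR⟩ := eventually_atTop.1 (hf.and (hg.and (hg_pos.and (hg'_nonneg.and hC))))
  choose! hf hg hg_pos hg'_nonneg hC using hR
  set K := max C (‖f R‖ / g R)
  have hKg : ∀ x ≥ R, HasDerivAt (fun x ↦ K * g x) (K * g' x) x :=
    fun x hx ↦ (hg x hx).const_mul K
  have hle : ∀ x ≥ R, ‖f x‖ ≤ K * g x := fun x hx ↦
    image_norm_le_of_norm_deriv_right_le_deriv_boundary'
      (fun y hy ↦ (hf y hy.1).continuousAt.continuousWithinAt)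
      (fun y hy ↦ (hf y hy.1).hasDerivWithinAt)
      ((div_le_iff₀ (hg_pos R le_rfl)).1 (le_max_right _ _))
      (fun y hy ↦ (hKg y hy.1).continuousAt.continuousWithinAt)
      (fun y hy ↦ (hKg y hy.1).hasDerivWithinAt)
      (fun y hy ↦ calc
        ‖f' y‖ ≤ C * g' y := by simpa only [norm_of_nonneg (hg'_nonneg y hy.1)] using hC y hy.1
        _ ≤ K * g' y := mul_le_mul_of_nonneg_right (le_max_left _ _) (hg'_nonneg y hy.1))
      (right_mem_Icc.2 hx)
  refine IsBigO.of_bound K (eventually_atTop.2 ⟨R, fun x hx ↦ ?_⟩)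
  simpa only [norm_of_nonneg (hg_pos x hx).le] using hle x hx

theorem isTheta_atTop_of_hasDerivAt {f f' g g' : ℝ → ℝ}
    (hf : ∀ᶠ x in atTop, HasDerivAt f (f' x) x) (hg : ∀ᶠ x in atTop, HasDerivAt g (g' x) x)
    (hf_pos : ∀ᶠ x in atTop, 0 < f x) (hg_pos : ∀ᶠ x in atTop, 0 < g x)
    (hf'_nonneg : ∀ᶠ x in atTop, 0 ≤ f' x) (hg'_nonneg : ∀ᶠ x in atTop, 0 ≤ g' x)
    (hfg : f' =Θ[atTop] g') : f =Θ[atTop] g :=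
  ⟨isBigO_atTop_of_hasDerivAt hf hg hg_pos hg'_nonneg hfg.1,
    isBigO_atTop_of_hasDerivAt hg hf hf_pos hf'_nonneg hfg.2⟩

/-- The condition `w' = o(w ^ 2)` makes `φ * w' / w ^ 2` negligible in `(φ / w)'`, which is
therefore comparable to `φ' / w`, that is, to `φ`. -/
theorem isTheta_div_atTop_of_hasDerivAt {F φ φ' w w' : ℝ → ℝ}
    (hF : ∀ᶠ r in atTop, HasDerivAt F (φ r) r) (hφ : ∀ᶠ r in atTop, HasDerivAt φ (φ' r) r)
    (hw : ∀ᶠ r in atTop, HasDerivAt w (w' r) r) (hF_pos : ∀ᶠ r in atTop, 0 < F r)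
    (hφ_pos : ∀ᶠ r in atTop, 0 < φ r) (hw_pos : ∀ᶠ r in atTop, 0 < w r)
    (hφ'_nonneg : ∀ᶠ r in atTop, 0 ≤ φ' r) (hφ' : φ' =Θ[atTop] fun r ↦ w r * φ r)
    (hw' : w' =o[atTop] fun r ↦ w r ^ 2) : F =Θ[atTop] fun r ↦ φ r / w r := by
  have main_term : (fun r ↦ φ' r * w r) =Θ[atTop] fun r ↦ φ r * w r ^ 2 :=
    (hφ'.mul (isTheta_refl w atTop)).trans_eventuallyEq (.of_eq (by ext r; ring))
  have error_term : (fun r ↦ φ r * w' r) =o[atTop] fun r ↦ φ' r * w r :=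
    ((isBigO_refl φ atTop).mul_isLittleO hw').trans_isTheta main_term.symm
  have quotient_deriv : ∀ᶠ r in atTop,
      HasDerivAt (fun r ↦ φ r / w r) ((φ' r * w r - φ r * w' r) / w r ^ 2) r := by
    filter_upwards [hφ, hw, hw_pos] with r hφ hw hw_pos using hφ.fun_div hw hw_pos.ne'
  have quotient_deriv_nonneg :
      ∀ᶠ r in atTop, 0 ≤ (φ' r * w r - φ r * w' r) / w r ^ 2 := by
    filter_upwards [error_term.def one_pos, hφ'_nonneg, hw_pos] with r herr hφ' hw
    rw [one_mul, norm_of_nonneg (mul_nonneg hφ' hw.le)] at herr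
    exact div_nonneg (sub_nonneg.2 ((le_norm_self _).trans herr)) (sq_nonneg _)
  have quotient_deriv_isTheta :
      (fun r ↦ (φ' r * w r - φ r * w' r) / w r ^ 2) =Θ[atTop] φ := by
    have numerator : (fun r ↦ φ' r * w r - φ r * w' r) =Θ[atTop] fun r ↦ φ r * w r ^ 2 := by
      simpa only [sub_eq_add_neg, Pi.add_def] using
        main_term.add_isLittleO (error_term.trans_isTheta main_term).neg_left
    refine (numerator.div (isTheta_refl (fun r ↦ w r ^ 2) atTop)).trans_eventuallyEq ?_
    filter_upwards [hw_pos] with r hw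
    exact mul_div_cancel_right₀ _ (pow_pos hw 2).ne'
  exact isTheta_atTop_of_hasDerivAt hF quotient_deriv hF_pos
    (hφ_pos.and hw_pos |>.mono fun r h ↦ div_pos h.1 h.2) (hφ_pos.mono fun r h ↦ h.le)
    quotient_deriv_nonneg quotient_deriv_isTheta.symm

theorem isBigO_integral_nhdsGT_of_monotoneOn {E : Type*} [NormedAddCommGroup E] [NormedSpace ℝ E]
    {φ : ℝ → E} {m : ℝ → ℝ} {a : ℝ} (hm : MonotoneOn m (Ioi a)) (hm_nonneg : ∀ t > a, 0 ≤ m t)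
    (hφ : φ =O[𝓝[>] a] m) :
    (fun s ↦ ∫ t in a..s, φ t) =O[𝓝[>] a] fun s ↦ m s * (s - a) := by
  obtain ⟨C, hC_pos, hC⟩ := hφ.exists_pos
  obtain ⟨δ, hδ, hbound⟩ := mem_nhdsGT_iff_exists_Ioo_subset.1 hC.bound
  refine IsBigO.of_bound C ?_
  filter_upwards [Ioo_mem_nhdsGT hδ] with s hs
  have hle : ∀ t ∈ uIoc a s, ‖φ t‖ ≤ C * m s := fun t ht ↦ by
    rw [uIoc_of_le hs.1.le] at ht
    calc ‖φ t‖ ≤ C * ‖m t‖ := hbound ⟨ht.1, ht.2.trans_lt hs.2⟩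
      _ = C * m t := by rw [norm_of_nonneg (hm_nonneg t ht.1)]
      _ ≤ C * m s := mul_le_mul_of_nonneg_left (hm ht.1 hs.1 ht.2) hC_pos.le
  simpa only [norm_mul, norm_of_nonneg (hm_nonneg s hs.1), norm_eq_abs, mul_assoc] using
    intervalIntegral.norm_integral_le_of_norm_le_const hle

theorem isTheta_id_nhdsGT_zero_of_deriv_ne_zero {ψ : ℝ → ℝ} (hψ0 : ψ 0 = 0)
    (hψ'0 : deriv ψ 0 ≠ 0) : ψ =Θ[𝓝[>] 0] id := by
  have hslope := hasDerivAt_iff_tendsto_slope.1 (differentiableAt_of_deriv_ne_zero hψ'0).hasDerivAt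
  simp only [slope_fun_def_field, hψ0, sub_zero] at hslope
  exact (isTheta_of_div_tendsto_nhds_ne_zero hslope hψ'0).mono
    (nhdsWithin_mono 0 fun _ ht ↦ (mem_Ioi.1 ht).ne') |>.symm

end Comparison

section IntegralFromLeftEndpoint

variable {a r : ℝ}

theorem intervalIntegrable_of_continuousOn_Ici {E : Type*} [NormedAddCommGroup E] {f : ℝ → E}
    (hf : ContinuousOn f (Ici a)) (hr : a ≤ r) : IntervalIntegrable f volume a r :=
  (hf.mono Icc_subset_Ici_self).intervalIntegrable_of_Icc hr

theorem hasDerivAt_integral_of_continuousOn_Ici {E : Type*} [NormedAddCommGroup E]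
    [NormedSpace ℝ E] [CompleteSpace E] {f : ℝ → E} (hf : ContinuousOn f (Ici a)) (hr : a < r) :
    HasDerivAt (fun x ↦ ∫ t in a..x, f t) (f r) r :=
  intervalIntegral.integral_hasDerivAt_right (intervalIntegrable_of_continuousOn_Ici hf hr.le)
    ((hf.mono Ioi_subset_Ici_self).stronglyMeasurableAtFilter isOpen_Ioi r hr)
    (hf.continuousAt (Ici_mem_nhds hr))

theorem integral_pos_of_continuousOn_Ici {f : ℝ → ℝ} (hf : ContinuousOn f (Ici a))
    (hf_pos : ∀ t > a, 0 < f t) (hr : a < r) : 0 < ∫ t in a..r, f t :=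
  intervalIntegral.intervalIntegral_pos_of_pos_on (intervalIntegrable_of_continuousOn_Ici hf hr.le)
    (fun t ht ↦ hf_pos t ht.1) hr

end IntegralFromLeftEndpoint

/-- The ratio `(∫₀^s φ) / φ(s)`. For `φ = ψ ^ (N - 1)` it is the volume of the geodesic ball of
radius `s` about the pole of the model manifold divided by the area of its boundary sphere, and it
is the integrand of `Hfun N ψ`. -/
noncomputable def volumeAreaRatio (φ : ℝ → ℝ) (s : ℝ) : ℝ :=
  (∫ t in (0 : ℝ)..s, φ t) / φ s

section VolumeAreaRatio

variable {φ : ℝ → ℝ}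

theorem volumeAreaRatio_pos (hφ : ContinuousOn φ (Ici 0)) (hφ_pos : ∀ t > 0, 0 < φ t) {s : ℝ}
    (hs : 0 < s) : 0 < volumeAreaRatio φ s :=
  div_pos (integral_pos_of_continuousOn_Ici hφ hφ_pos hs) (hφ_pos s hs)

theorem volumeAreaRatio_isBigO_nhdsGT_zero {m : ℝ → ℝ} (hm : MonotoneOn m (Ioi 0))
    (hm_pos : ∀ t > 0, 0 < m t) (hφm : φ =Θ[𝓝[>] 0] m) :
    volumeAreaRatio φ =O[𝓝[>] 0] id := by
  have hint : (fun s ↦ ∫ t in (0 : ℝ)..s, φ t) =O[𝓝[>] 0] fun s ↦ m s * (s - 0) :=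
    isBigO_integral_nhdsGT_of_monotoneOn hm (fun t ht ↦ (hm_pos t ht).le) hφm.1
  refine (hint.mul hφm.inv.1).congr' (.of_eq rfl) ?_
  filter_upwards [self_mem_nhdsWithin] with s hs
  have := (hm_pos s hs).ne'
  simp only [id]
  field_simp
  ring

theorem continuousOn_volumeAreaRatio (hφ : ContinuousOn φ (Ici 0)) (hφ_pos : ∀ t > 0, 0 < φ t)
    {m : ℝ → ℝ} (hm : MonotoneOn m (Ioi 0)) (hm_pos : ∀ t > 0, 0 < m t)
    (hφm : φ =Θ[𝓝[>] 0] m) : ContinuousOn (volumeAreaRatio φ) (Ici 0) := by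
  intro s hs
  rcases (mem_Ici.1 hs).eq_or_lt with rfl | hs
  · have hzero : volumeAreaRatio φ 0 = 0 := by simp [volumeAreaRatio]
    rw [← continuousWithinAt_Ioi_iff_Ici, ContinuousWithinAt, hzero]
    exact (volumeAreaRatio_isBigO_nhdsGT_zero hm hm_pos hφm).trans_tendsto
      (tendsto_id.mono_left nhdsWithin_le_nhds)
  · exact ((hasDerivAt_integral_of_continuousOn_Ici hφ hs).continuousAt.div
      (hφ.continuousAt (Ici_mem_nhds hs)) (hφ_pos s hs).ne').continuousWithinAt

theorem volumeAreaRatio_isTheta_inv (hφ : ContinuousOn φ (Ici 0)) (hφ_pos : ∀ t > 0, 0 < φ t)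
    {φ' : ℝ → ℝ} (hderiv : ∀ᶠ r in atTop, HasDerivAt φ (φ' r) r)
    (hφ'_nonneg : ∀ᶠ r in atTop, 0 ≤ φ' r) (hφ' : φ' =Θ[atTop] fun r ↦ r * φ r) :
    volumeAreaRatio φ =Θ[atTop] fun r ↦ r⁻¹ := by
  have hpos : ∀ᶠ r : ℝ in atTop, 0 < r := eventually_gt_atTop 0
  have hone : (fun _ : ℝ ↦ (1 : ℝ)) =o[atTop] fun r ↦ r ^ 2 := by
    simpa only [pow_zero] using isLittleO_pow_pow_atTop_of_lt (𝕜 := ℝ) two_pos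
  have hvolume : (fun r ↦ ∫ t in (0 : ℝ)..r, φ t) =Θ[atTop] fun r ↦ φ r / r :=
    isTheta_div_atTop_of_hasDerivAt
      (hpos.mono fun r hr ↦ hasDerivAt_integral_of_continuousOn_Ici hφ hr) hderiv
      (.of_forall hasDerivAt_id)
      (hpos.mono fun r hr ↦ integral_pos_of_continuousOn_Ici hφ hφ_pos hr)
      (hpos.mono hφ_pos) hpos hφ'_nonneg hφ' hone
  refine (hvolume.div (isTheta_refl φ atTop)).trans_eventuallyEq ?_
  filter_upwards [hpos] with r hr
  rw [div_right_comm, div_self (hφ_pos r hr).ne', one_div]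

end VolumeAreaRatio

section LogDerivative

variable {ψ w : ℝ → ℝ} {l : Filter ℝ}

theorem eventually_hasDerivAt_of_deriv_isTheta {g : ℝ → ℝ} (hg : ∀ᶠ r in l, g r ≠ 0)
    (hψ' : deriv ψ =Θ[l] g) : ∀ᶠ r in l, HasDerivAt ψ (deriv ψ r) r := by
  filter_upwards [hψ'.eq_zero_iff, hg] with r hiff hgr
  exact (differentiableAt_of_deriv_ne_zero (hiff.not.2 hgr)).hasDerivAt

theorem pow_deriv_isTheta_mul_pow {ψ' : ℝ → ℝ} {n : ℕ} (hn : n ≠ 0)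
    (hψ' : ψ' =Θ[l] fun r ↦ w r * ψ r) :
    (fun r ↦ n * ψ r ^ (n - 1) * ψ' r) =Θ[l] fun r ↦ w r * ψ r ^ n := by
  simp only [mul_assoc]
  refine (isTheta_const_mul_left (Nat.cast_ne_zero.2 hn)).2 ?_
  refine ((isTheta_refl (fun r ↦ ψ r ^ (n - 1)) l).mul hψ').trans_eventuallyEq (.of_eq ?_)
  ext r
  rw [mul_left_comm, pow_sub_one_mul hn]

end LogDerivative

/-- A model function without its smoothness: comparability with `r` near the pole replaces the
normalization `ψ 0 = 0`, `ψ' 0 = 1`, so that conical poles are allowed. -/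
structure IsWeakModelFunction (ψ : ℝ → ℝ) : Prop where
  continuousOn : ContinuousOn ψ (Ici 0)
  pos : ∀ r > 0, 0 < ψ r
  isTheta_id : ψ =Θ[𝓝[>] 0] id

namespace IsWeakModelFunction

variable {N : ℕ} {ψ : ℝ → ℝ}

theorem continuousOn_volumeAreaRatio_pow (hψ : IsWeakModelFunction ψ) (n : ℕ) :
    ContinuousOn (volumeAreaRatio fun r ↦ ψ r ^ n) (Ici 0) :=
  continuousOn_volumeAreaRatio (hψ.continuousOn.pow n) (fun t ht ↦ pow_pos (hψ.pos t ht) n)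
    (fun _ hx _ _ hxy ↦ pow_le_pow_left₀ (mem_Ioi.1 hx).le hxy n) (fun _ ht ↦ pow_pos ht n)
    (hψ.isTheta_id.pow n)

theorem hasDerivAt_Hfun (hψ : IsWeakModelFunction ψ) {r : ℝ} (hr : 0 < r) :
    HasDerivAt (Hfun N ψ) (volumeAreaRatio (fun t ↦ ψ t ^ (N - 1)) r) r :=
  hasDerivAt_integral_of_continuousOn_Ici (hψ.continuousOn_volumeAreaRatio_pow (N - 1)) hr

theorem deriv_Hfun_pos (hψ : IsWeakModelFunction ψ) {r : ℝ} (hr : 0 < r) :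
    0 < deriv (Hfun N ψ) r := by
  rw [hψ.hasDerivAt_Hfun hr |>.deriv]
  exact volumeAreaRatio_pos (hψ.continuousOn.pow _) (fun t ht ↦ pow_pos (hψ.pos t ht) _) hr

theorem Hfun_pos (hψ : IsWeakModelFunction ψ) {r : ℝ} (hr : 0 < r) : 0 < Hfun N ψ r :=
  integral_pos_of_continuousOn_Ici (hψ.continuousOn_volumeAreaRatio_pow (N - 1))
    (fun _ hs ↦ volumeAreaRatio_pos (hψ.continuousOn.pow _)
      (fun t ht ↦ pow_pos (hψ.pos t ht) _) hs) hr

theorem deriv_Hfun_isTheta_inv (hψ : IsWeakModelFunction ψ) (hN : 2 ≤ N)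
    (hψ'_nonneg : ∀ᶠ r in atTop, 0 ≤ deriv ψ r) (hψ' : deriv ψ =Θ[atTop] fun r ↦ r * ψ r) :
    deriv (Hfun N ψ) =Θ[atTop] fun r ↦ r⁻¹ := by
  have hpos : ∀ᶠ r : ℝ in atTop, 0 < r := eventually_gt_atTop 0
  have hψ_deriv : ∀ᶠ r in atTop, HasDerivAt ψ (deriv ψ r) r :=
    eventually_hasDerivAt_of_deriv_isTheta
      (hpos.mono fun r hr ↦ (mul_pos hr (hψ.pos r hr)).ne') hψ'
  have hratio : volumeAreaRatio (fun r ↦ ψ r ^ (N - 1)) =Θ[atTop] fun r ↦ r⁻¹ :=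
    volumeAreaRatio_isTheta_inv (hψ.continuousOn.pow _) (fun t ht ↦ pow_pos (hψ.pos t ht) _)
      (hψ_deriv.mono fun r hr ↦ hr.fun_pow (N - 1))
      (by
        filter_upwards [hψ'_nonneg, hpos] with r hψ'r hr
        have := hψ.pos r hr
        positivity)
      (pow_deriv_isTheta_mul_pow (by lia) hψ')
  exact EventuallyEq.trans_isTheta (hpos.mono fun r hr ↦ (hψ.hasDerivAt_Hfun hr).deriv) hratio

theorem Hfun_isTheta_log (hψ : IsWeakModelFunction ψ) (hN : 2 ≤ N)
    (hψ'_nonneg : ∀ᶠ r in atTop, 0 ≤ deriv ψ r) (hψ' : deriv ψ =Θ[atTop] fun r ↦ r * ψ r) :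
    Hfun N ψ =Θ[atTop] log := by
  have hpos : ∀ᶠ r : ℝ in atTop, 0 < r := eventually_gt_atTop 0
  exact isTheta_atTop_of_hasDerivAt
    (hpos.mono fun r hr ↦ (hψ.hasDerivAt_Hfun hr).differentiableAt.hasDerivAt)
    (hpos.mono fun r hr ↦ hasDerivAt_log hr.ne') (hpos.mono fun r hr ↦ hψ.Hfun_pos hr)
    ((eventually_gt_atTop 1).mono fun r hr ↦ log_pos hr)
    (hpos.mono fun r hr ↦ (hψ.deriv_Hfun_pos hr).le)
    (hpos.mono fun r hr ↦ (inv_pos.2 hr).le) (hψ.deriv_Hfun_isTheta_inv hN hψ'_nonneg hψ')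

end IsWeakModelFunction

section GaussianGrowth

theorem deriv_eventuallyEq_atTop {E : Type*} [NormedAddCommGroup E] [NormedSpace ℝ E]
    {f g : ℝ → E} (hfg : f =ᶠ[atTop] g) : deriv f =ᶠ[atTop] deriv g := by
  obtain ⟨R, hR⟩ := eventually_atTop.1 hfg
  filter_upwards [eventually_gt_atTop R] with r hr
  exact (eventuallyEq_of_mem (Ioi_mem_nhds hr) fun x hx ↦ hR x (mem_Ioi.1 hx).le).deriv_eq

variable {C₀ a b : ℝ} {ψ : ℝ → ℝ}

theorem deriv_eventuallyEq_of_eventuallyEq_exp_sq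
    (hψ : ψ =ᶠ[atTop] fun r ↦ a * exp (C₀ * r ^ 2 / 2) - b) :
    deriv ψ =ᶠ[atTop] fun r ↦ r * (C₀ * (a * exp (C₀ * r ^ 2 / 2))) := by
  refine (deriv_eventuallyEq_atTop hψ).trans (.of_eq (funext fun r ↦ HasDerivAt.deriv ?_))
  have hexponent : HasDerivAt (fun r ↦ C₀ * r ^ 2 / 2) (C₀ * r) r :=
    (((hasDerivAt_pow 2 r).const_mul C₀).div_const 2).congr_deriv (by push_cast; ring)
  exact ((hexponent.exp.const_mul a).sub_const b).congr_deriv (by ring)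

theorem deriv_nonneg_of_eventuallyEq_exp_sq (hC₀ : 0 ≤ C₀) (ha : 0 ≤ a)
    (hψ : ψ =ᶠ[atTop] fun r ↦ a * exp (C₀ * r ^ 2 / 2) - b) :
    ∀ᶠ r in atTop, 0 ≤ deriv ψ r := by
  filter_upwards [deriv_eventuallyEq_of_eventuallyEq_exp_sq hψ, eventually_ge_atTop 0] with r h hr
  rw [h]
  positivity

theorem deriv_isTheta_of_eventuallyEq_exp_sq (hC₀ : 0 < C₀) (ha : a ≠ 0)
    (hψ : ψ =ᶠ[atTop] fun r ↦ a * exp (C₀ * r ^ 2 / 2) - b) :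
    deriv ψ =Θ[atTop] fun r ↦ r * ψ r := by
  have hexp : Tendsto (fun r ↦ exp (C₀ * r ^ 2 / 2)) atTop atTop :=
    tendsto_exp_atTop.comp
      (((tendsto_pow_atTop two_ne_zero).const_mul_atTop hC₀).atTop_div_const two_pos)
  have hconst : (fun _ ↦ b) =o[atTop] fun r ↦ a * exp (C₀ * r ^ 2 / 2) :=
    (isLittleO_const_left.2 (.inr (tendsto_norm_atTop_atTop.comp hexp))).trans_isTheta
      ((isTheta_const_mul_right ha).2 (isTheta_refl _ _))
  have hψ_exp : ψ =Θ[atTop] fun r ↦ a * exp (C₀ * r ^ 2 / 2) :=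
    hψ.trans_isTheta (by
      simpa only [sub_eq_add_neg, Pi.add_def] using
        (isTheta_refl _ atTop).add_isLittleO hconst.neg_left)
  exact (deriv_eventuallyEq_of_eventuallyEq_exp_sq hψ).trans_isTheta
    ((isTheta_refl _ _).mul ((isTheta_const_mul_left hC₀.ne').2 hψ_exp.symm))

end GaussianGrowth

theorem statement15_general {N : ℕ} (hN : 2 ≤ N) {ψ : ℝ → ℝ} (hψ : IsWeakModelFunction ψ)
    (hψ'_nonneg : ∀ᶠ r in atTop, 0 ≤ deriv ψ r) (hψ' : deriv ψ =Θ[atTop] fun r ↦ r * ψ r) :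
    ∃ c₁ c₂ R : ℝ, 0 < c₁ ∧ c₁ < c₂ ∧ 2 ≤ R ∧
      ∀ r ≥ R,
        c₁ * log r ≤ Hfun N ψ r ∧ Hfun N ψ r ≤ c₂ * log r ∧
        c₁ / r ≤ deriv (Hfun N ψ) r ∧ deriv (Hfun N ψ) r ≤ c₂ / r := by
  have hpos : ∀ᶠ r : ℝ in atTop, 0 < r := eventually_gt_atTop 0
  have hH := eventually_inv_mul_le_and_le_mul_of_isTheta
    (hψ.Hfun_isTheta_log hN hψ'_nonneg hψ') (hpos.mono fun r hr ↦ (hψ.Hfun_pos hr).le)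
    ((eventually_ge_atTop 1).mono fun r hr ↦ log_nonneg hr)
  have hH' := eventually_inv_mul_le_and_le_mul_of_isTheta
    (hψ.deriv_Hfun_isTheta_inv hN hψ'_nonneg hψ')
    (hpos.mono fun r hr ↦ (hψ.deriv_Hfun_pos hr).le) (hpos.mono fun r hr ↦ (inv_pos.2 hr).le)
  obtain ⟨K, hK, hHK, hH'K⟩ := ((eventually_gt_atTop 1).and (hH.and hH')).exists
  obtain ⟨R, hR⟩ := eventually_atTop.1 (hHK.and hH'K)
  refine ⟨K⁻¹, K, max 2 R, by positivity, (inv_lt_one_of_one_lt₀ hK).trans hK, le_max_left _ _,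
    fun r hr ↦ ?_⟩
  obtain ⟨⟨hlog_le, hle_log⟩, hinv_le, hle_inv⟩ := hR r ((le_max_right _ _).trans hr)
  exact ⟨hlog_le, hle_log, hinv_le, hle_inv⟩

/-- If `ψ` is a model function with `ψ(r) = a e^{C₀ r²/2} - b` for `r ≥ 1` (where
`a e^{C₀/2} > b > 0`), then the associated function `H` satisfies
`c₁ log r ≤ H(r) ≤ c₂ log r` and `c₁/r ≤ H'(r) ≤ c₂/r` for `r ≥ R`, for suitable
constants `0 < c₁ < c₂` and `R ≥ 2`. -/
theorem statement15 (N : ℕ) (hN : 2 ≤ N) (C₀ a b : ℝ)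
    (hC₀ : 0 < C₀) (ha : 0 < a) (hb : 0 < b) (hab : b < a * Real.exp (C₀/2))
    (ψ : ℝ → ℝ)
    (hsmooth : ContDiffOn ℝ (⊤ : ℕ∞) ψ (Ici 0))
    (hψ0 : ψ 0 = 0) (hψ'0 : deriv ψ 0 = 1)
    (hψpos : ∀ r > (0:ℝ), 0 < ψ r)
    (hψeq : ∀ r ≥ (1:ℝ), ψ r = a * Real.exp (C₀ * r^2/2) - b) :
    ∃ c₁ c₂ R : ℝ, 0 < c₁ ∧ c₁ < c₂ ∧ 2 ≤ R ∧
      ∀ r ≥ R,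
        c₁ * Real.log r ≤ Hfun N ψ r ∧ Hfun N ψ r ≤ c₂ * Real.log r ∧
        c₁ / r ≤ deriv (Hfun N ψ) r ∧ deriv (Hfun N ψ) r ≤ c₂ / r := by
  have hψ : ψ =ᶠ[atTop] fun r ↦ a * exp (C₀ * r ^ 2 / 2) - b := eventually_atTop.2 ⟨1, hψeq⟩
  exact statement15_general hN
    ⟨hsmooth.continuousOn, hψpos,
      isTheta_id_nhdsGT_zero_of_deriv_ne_zero hψ0 (hψ'0.trans_ne one_ne_zero)⟩
    (deriv_nonneg_of_eventuallyEq_exp_sq hC₀.le ha.le hψ)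
    (deriv_isTheta_of_eventuallyEq_exp_sq hC₀ ha.ne' hψ)
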